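/- arXiv:2506.18473 — 3 statements merged into one kernel-verified Lean document; each statement's English description precedes it below -/
import Mathlib

section
/- There exists a strictly convex equilateral pentagon ABCDE in the Euclidean plane whose interior angles α, β, γ, δ, ε satisfy 2β + γ = 2π and 2δ + α = 2π (the type 7 pentagon P7). -/
/-!
The angle conditions say that, if the exterior angles at `B` and `D` are `b` and `d`, then those at
`C` and `A` are `π - 2b` and `π - 2d`. With `AB` pointing in direction `0`, the sides of the
pentagon thus point in the directions `0`, `b`, `π - b`, `π + (d - b)`, `π + 2d`. For
`b, d ∈ (0, π / 2)` all five exterior angles lie in `(0, π)`, which makes the pentagon convex as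
soon as it closes up. With unit sides it does if and only if `cos (d - b) + cos 2d = 1` and
`sin (d - b) + sin 2d = 2 sin b`. The first equation determines `d - b ∈ [0, π]` from `d`, and the
difference of the two sides of the second then changes sign between `d = π / 6` and `d = π / 4`.
-/

open EuclideanGeometry

/-- Signed area determinant of two plane vectors. -/
noncomputable def det2 (u v : EuclideanSpace ℝ (Fin 2)) : ℝ :=
  u 0 * v 1 - u 1 * v 0

/-- `R` lies strictly to the left of the directed line from `P` to `Q`. -/
def SLeft (P Q R : EuclideanSpace ℝ (Fin 2)) : Prop :=
  0 < det2 (Q - P) (R - P)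

/-- The five points are in strictly convex position, listed in counterclockwise
cyclic order along their convex hull (in particular no three are collinear):
for every directed edge of the pentagon, all remaining vertices lie strictly to its left. -/
def CcwConvex5 (A B C D E : EuclideanSpace ℝ (Fin 2)) : Prop :=
  SLeft A B C ∧ SLeft A B D ∧ SLeft A B E ∧
  SLeft B C D ∧ SLeft B C E ∧ SLeft B C A ∧
  SLeft C D E ∧ SLeft C D A ∧ SLeft C D B ∧
  SLeft D E A ∧ SLeft D E B ∧ SLeft D E C ∧
  SLeft E A B ∧ SLeft E A C ∧ SLeft E A D

/-- The five points are in strictly convex position, listed in cyclic order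
(either orientation) along their convex hull, with no three collinear. -/
def ConvexPos5 (A B C D E : EuclideanSpace ℝ (Fin 2)) : Prop :=
  CcwConvex5 A B C D E ∨ CcwConvex5 E D C B A

/-- The pentagon `ABCDE` is equilateral. -/
def Equilateral5 (A B C D E : EuclideanSpace ℝ (Fin 2)) : Prop :=
  dist A B = dist B C ∧ dist B C = dist C D ∧ dist C D = dist D E ∧ dist D E = dist E A

section

open Real Set

/-- The unit vector in direction `θ`, measured counterclockwise from the first coordinate axis. -/
noncomputable def unitVec (θ : ℝ) : EuclideanSpace ℝ (Fin 2) := !₂[cos θ, sin θ]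

lemma inner_unitVec (θ φ : ℝ) : inner ℝ (unitVec θ) (unitVec φ) = cos (φ - θ) := by
  simp [unitVec, PiLp.inner_apply, Fin.sum_univ_two, cos_sub]

lemma norm_unitVec (θ : ℝ) : ‖unitVec θ‖ = 1 := by
  rw [norm_eq_sqrt_real_inner, inner_unitVec, sub_self, cos_zero, sqrt_one]

lemma unitVec_add_two_pi (θ : ℝ) : unitVec (θ + 2 * π) = unitVec θ := by
  simp [unitVec]

lemma angle_unitVec {θ φ : ℝ} (h : φ ∈ Icc θ (θ + π)) :
    InnerProductGeometry.angle (unitVec θ) (unitVec φ) = φ - θ := by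
  rw [InnerProductGeometry.angle, inner_unitVec, norm_unitVec, norm_unitVec, one_mul, div_one,
    arccos_cos (by linarith [h.1]) (by linarith [h.2])]

lemma det2_add_right (u v w : EuclideanSpace ℝ (Fin 2)) :
    det2 u (v + w) = det2 u v + det2 u w := by
  simp only [det2, PiLp.add_apply]
  ring

lemma det2_self (u : EuclideanSpace ℝ (Fin 2)) : det2 u u = 0 := by
  rw [det2, mul_comm, sub_self]

lemma det2_smul_smul (r s : ℝ) (u v : EuclideanSpace ℝ (Fin 2)) :
    det2 (r • u) (s • v) = r * s * det2 u v := by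
  simp only [det2, PiLp.smul_apply, smul_eq_mul]
  ring

lemma det2_unitVec (θ φ : ℝ) : det2 (unitVec θ) (unitVec φ) = sin (φ - θ) := by
  simp only [det2, unitVec, PiLp.toLp_apply, Matrix.cons_val_zero, Matrix.cons_val_one, sin_sub]
  ring

/-- The directed segment from `P` to `Q` is nondegenerate and points in direction `θ`; the angle
is a real number, so it is only determined modulo `2π`. -/
def HasDirection (P Q : EuclideanSpace ℝ (Fin 2)) (θ : ℝ) : Prop :=
  ∃ r : ℝ, 0 < r ∧ Q - P = r • unitVec θ

namespace HasDirection

variable {P Q R S T : EuclideanSpace ℝ (Fin 2)} {θ φ : ℝ}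

lemma of_sub_eq (h : Q - P = unitVec θ) : HasDirection P Q θ :=
  ⟨1, one_pos, by rw [h, one_smul]⟩

lemma add_two_pi (h : HasDirection P Q θ) : HasDirection P Q (θ + 2 * π) := by
  rwa [HasDirection, unitVec_add_two_pi]

lemma angle_eq (hPQ : HasDirection P Q θ) (hQR : HasDirection Q R φ) (h : φ ∈ Icc θ (θ + π)) :
    ∠ P Q R = π - (φ - θ) := by
  obtain ⟨r, hr, hPQ⟩ := hPQ
  obtain ⟨s, hs, hQR⟩ := hQR
  rw [EuclideanGeometry.angle, vsub_eq_sub, vsub_eq_sub, ← neg_sub Q P, hPQ, hQR,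
    InnerProductGeometry.angle_neg_left, InnerProductGeometry.angle_smul_left_of_pos _ _ hr,
    InnerProductGeometry.angle_smul_right_of_pos _ _ hs, angle_unitVec h]

lemma exists_det2_eq_mul_sin (hPQ : HasDirection P Q θ) (hRS : HasDirection R S φ) :
    ∃ r : ℝ, 0 < r ∧ det2 (Q - P) (S - R) = r * sin (φ - θ) := by
  obtain ⟨r, hr, hPQ⟩ := hPQ
  obtain ⟨s, hs, hRS⟩ := hRS
  exact ⟨r * s, mul_pos hr hs, by rw [hPQ, hRS, det2_smul_smul, det2_unitVec]⟩

lemma det2_nonneg (hPQ : HasDirection P Q θ) (hRS : HasDirection R S φ)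
    (h : φ ∈ Icc θ (θ + π)) : 0 ≤ det2 (Q - P) (S - R) := by
  obtain ⟨r, hr, hdet⟩ := hPQ.exists_det2_eq_mul_sin hRS
  rw [hdet]
  exact mul_nonneg hr.le (sin_nonneg_of_nonneg_of_le_pi (by linarith [h.1]) (by linarith [h.2]))

lemma det2_pos (hPQ : HasDirection P Q θ) (hRS : HasDirection R S φ)
    (h : φ ∈ Ioo θ (θ + π)) : 0 < det2 (Q - P) (S - R) := by
  obtain ⟨r, hr, hdet⟩ := hPQ.exists_det2_eq_mul_sin hRS
  rw [hdet]
  exact mul_pos hr (sin_pos_of_pos_of_lt_pi (by linarith [h.1]) (by linarith [h.2]))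

lemma det2_neg (hPQ : HasDirection P Q θ) (hRS : HasDirection R S φ)
    (h : θ + 2 * π ∈ Ioo φ (φ + π)) : det2 (Q - P) (S - R) < 0 := by
  obtain ⟨r, hr, hdet⟩ := hPQ.exists_det2_eq_mul_sin hRS
  rw [hdet, ← sin_sub_two_pi]
  exact mul_neg_of_pos_of_neg hr
    (sin_neg_of_neg_of_neg_pi_lt (by linarith [h.1]) (by linarith [h.2]))

lemma sLeft_of_pentagon {θ₁ θ₂ θ₃ θ₄ θ₅ : ℝ} (hPQ : HasDirection P Q θ₁) (hQR : HasDirection Q R θ₂)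
    (hRS : HasDirection R S θ₃) (hST : HasDirection S T θ₄) (hTP : HasDirection T P θ₅)
    (h₁₂ : θ₂ ∈ Ioo θ₁ (θ₁ + π)) (h₂₃ : θ₂ < θ₃) (h₃₄ : θ₃ < θ₄) (h₄₅ : θ₄ < θ₅)
    (h₅₁ : θ₁ + 2 * π ∈ Ioo θ₅ (θ₅ + π)) :
    SLeft P Q R ∧ SLeft P Q S ∧ SLeft P Q T := by
  -- Going around the pentagon, the height above the line `PQ` first increases and then decreases
  -- back to `0`, so it is positive at every vertex in between.
  have rise_QR : 0 < det2 (Q - P) (R - Q) := hPQ.det2_pos hQR h₁₂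
  have fall_TP : det2 (Q - P) (P - T) < 0 := hPQ.det2_neg hTP h₅₁
  have height_R : det2 (Q - P) (R - P) = det2 (Q - P) (R - Q) := by
    rw [← sub_add_sub_cancel R Q P, det2_add_right, det2_self, add_zero]
  have height_S : det2 (Q - P) (S - P) = det2 (Q - P) (S - R) + det2 (Q - P) (R - P) := by
    rw [← det2_add_right, sub_add_sub_cancel]
  have height_T : det2 (Q - P) (T - P) = det2 (Q - P) (T - S) + det2 (Q - P) (S - P) := by
    rw [← det2_add_right, sub_add_sub_cancel]
  have height_P : 0 = det2 (Q - P) (P - T) + det2 (Q - P) (T - P) := by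
    rw [← det2_add_right, sub_add_sub_cancel, sub_self]
    simp [det2]
  unfold SLeft
  refine ⟨by linarith, ?_, by linarith⟩
  rcases le_total θ₃ (θ₁ + π) with h | h
  · have rise_RS := hPQ.det2_nonneg hRS ⟨(h₁₂.1.trans h₂₃).le, h⟩
    linarith
  · have fall_ST := hPQ.det2_neg hST ⟨h₄₅.trans h₅₁.1, by linarith⟩
    linarith

end HasDirection

lemma ccwConvex5_of_hasDirection {A B C D E : EuclideanSpace ℝ (Fin 2)} {θ₁ θ₂ θ₃ θ₄ θ₅ : ℝ}
    (hAB : HasDirection A B θ₁) (hBC : HasDirection B C θ₂) (hCD : HasDirection C D θ₃)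
    (hDE : HasDirection D E θ₄) (hEA : HasDirection E A θ₅)
    (h₁₂ : θ₂ ∈ Ioo θ₁ (θ₁ + π)) (h₂₃ : θ₃ ∈ Ioo θ₂ (θ₂ + π)) (h₃₄ : θ₄ ∈ Ioo θ₃ (θ₃ + π))
    (h₄₅ : θ₅ ∈ Ioo θ₄ (θ₄ + π)) (h₅₁ : θ₁ + 2 * π ∈ Ioo θ₅ (θ₅ + π)) :
    CcwConvex5 A B C D E := by
  have shift {θ φ : ℝ} (h : φ ∈ Ioo θ (θ + π)) : φ + 2 * π ∈ Ioo (θ + 2 * π) (θ + 2 * π + π) :=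
    ⟨by linarith [h.1], by linarith [h.2]⟩
  have hAB' := hAB.add_two_pi
  have hBC' := hBC.add_two_pi
  have hCD' := hCD.add_two_pi
  have hDE' := hDE.add_two_pi
  obtain ⟨hABC, hABD, hABE⟩ := hAB.sLeft_of_pentagon hBC hCD hDE hEA h₁₂ h₂₃.1 h₃₄.1 h₄₅.1 h₅₁
  obtain ⟨hBCD, hBCE, hBCA⟩ :=
    hBC.sLeft_of_pentagon hCD hDE hEA hAB' h₂₃ h₃₄.1 h₄₅.1 h₅₁.1 (shift h₁₂)
  obtain ⟨hCDE, hCDA, hCDB⟩ :=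
    hCD.sLeft_of_pentagon hDE hEA hAB' hBC' h₃₄ h₄₅.1 h₅₁.1 (shift h₁₂).1 (shift h₂₃)
  obtain ⟨hDEA, hDEB, hDEC⟩ :=
    hDE.sLeft_of_pentagon hEA hAB' hBC' hCD' h₄₅ h₅₁.1 (shift h₁₂).1 (shift h₂₃).1 (shift h₃₄)
  obtain ⟨hEAB, hEAC, hEAD⟩ :=
    hEA.sLeft_of_pentagon hAB' hBC' hCD' hDE' h₅₁ (shift h₁₂).1 (shift h₂₃).1 (shift h₃₄).1
      (shift h₄₅)
  exact ⟨hABC, hABD, hABE, hBCD, hBCE, hBCA, hCDE, hCDA, hCDB, hDEA, hDEB, hDEC, hEAB, hEAC, hEAD⟩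

lemma dist_eq_one_of_sub_eq_unitVec {P Q : EuclideanSpace ℝ (Fin 2)} {θ : ℝ}
    (h : Q - P = unitVec θ) : dist P Q = 1 := by
  rw [dist_comm, dist_eq_norm, h, norm_unitVec]

lemma exists_equilateral5_hasDirection {θ₁ θ₂ θ₃ θ₄ θ₅ : ℝ}
    (h : unitVec θ₁ + unitVec θ₂ + unitVec θ₃ + unitVec θ₄ + unitVec θ₅ = 0) :
    ∃ A B C D E : EuclideanSpace ℝ (Fin 2), Equilateral5 A B C D E ∧
      HasDirection A B θ₁ ∧ HasDirection B C θ₂ ∧ HasDirection C D θ₃ ∧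
      HasDirection D E θ₄ ∧ HasDirection E A θ₅ := by
  let B := unitVec θ₁
  let C := B + unitVec θ₂
  let D := C + unitVec θ₃
  let E := D + unitVec θ₄
  have hAB : B - 0 = unitVec θ₁ := sub_zero B
  have hBC : C - B = unitVec θ₂ := add_sub_cancel_left _ _
  have hCD : D - C = unitVec θ₃ := add_sub_cancel_left _ _
  have hDE : E - D = unitVec θ₄ := add_sub_cancel_left _ _
  have hEA : 0 - E = unitVec θ₅ := by rw [zero_sub, neg_eq_of_add_eq_zero_right h]
  have equilateral : Equilateral5 0 B C D E := by
    simp only [Equilateral5, dist_eq_one_of_sub_eq_unitVec hAB, dist_eq_one_of_sub_eq_unitVec hBC,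
      dist_eq_one_of_sub_eq_unitVec hCD, dist_eq_one_of_sub_eq_unitVec hDE,
      dist_eq_one_of_sub_eq_unitVec hEA, and_self]
  exact ⟨0, B, C, D, E, equilateral, .of_sub_eq hAB, .of_sub_eq hBC, .of_sub_eq hCD,
    .of_sub_eq hDE, .of_sub_eq hEA⟩

lemma sum_unitVec_eq_zero {b d : ℝ} (hcos : cos (d - b) + cos (2 * d) = 1)
    (hsin : sin (d - b) + sin (2 * d) = 2 * sin b) :
    unitVec 0 + unitVec b + unitVec (π - b) + unitVec (d - b + π) + unitVec (2 * d + π) = 0 := by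
  ext i
  fin_cases i
  · simp [unitVec, cos_add_pi, cos_pi_sub]
    linarith
  · simp [unitVec, sin_add_pi, sin_pi_sub]
    linarith

lemma exists_closing_turn : ∃ d ∈ Icc (π / 6) (π / 4), ∃ t ∈ Icc 0 π,
    cos t + cos (2 * d) = 1 ∧ sin t + sin (2 * d) = 2 * sin (d - t) := by
  have hπ := pi_pos
  let t : ℝ → ℝ := fun d ↦ arccos (1 - cos (2 * d))
  have t_lower : t (π / 6) = π / 3 := by
    simp only [t]
    rw [show 2 * (π / 6) = π / 3 by ring, cos_pi_div_three, sub_half, ← cos_pi_div_three,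
      arccos_cos (by linarith) (by linarith)]
  have t_upper : t (π / 4) = 0 := by
    simp only [t]
    rw [show 2 * (π / 4) = π / 2 by ring, cos_pi_div_two, sub_zero, arccos_one]
  have lower : 2 * sin (π / 6 - t (π / 6)) ≤ sin (t (π / 6)) + sin (2 * (π / 6)) := by
    rw [t_lower, show 2 * (π / 6) = π / 3 by ring, show π / 6 - π / 3 = -(π / 6) by ring, sin_neg,
      sin_pi_div_six, sin_pi_div_three]
    linarith [sqrt_nonneg 3]
  have upper : sin (t (π / 4)) + sin (2 * (π / 4)) ≤ 2 * sin (π / 4 - t (π / 4)) := by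
    rw [t_upper, show 2 * (π / 4) = π / 2 by ring, sin_zero, sin_pi_div_two, sub_zero,
      sin_pi_div_four, zero_add, mul_div_cancel₀ _ two_ne_zero]
    exact one_le_sqrt.2 one_le_two
  obtain ⟨d, ⟨hd_lower, hd_upper⟩, hsin⟩ := isPreconnected_Icc.intermediate_value₂
    (f := fun d ↦ 2 * sin (d - t d)) (g := fun d ↦ sin (t d) + sin (2 * d))
    (left_mem_Icc.2 (by linarith : π / 6 ≤ π / 4)) (right_mem_Icc.2 (by linarith))
    (by fun_prop) (by fun_prop) lower upper
  have cos_nonneg : 0 ≤ cos (2 * d) :=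
    cos_nonneg_of_neg_pi_div_two_le_of_le (by linarith) (by linarith)
  have cos_t : cos (t d) = 1 - cos (2 * d) :=
    cos_arccos (by linarith [cos_le_one (2 * d)]) (by linarith)
  exact ⟨d, ⟨hd_lower, hd_upper⟩, t d, ⟨arccos_nonneg _, arccos_le_pi _⟩, by linarith, hsin.symm⟩

lemma exists_closing_angles : ∃ b ∈ Ioo 0 (π / 2), ∃ d ∈ Ioo 0 (π / 2),
    cos (d - b) + cos (2 * d) = 1 ∧ sin (d - b) + sin (2 * d) = 2 * sin b := by
  have hπ := pi_pos
  obtain ⟨d, ⟨hd_lower, hd_upper⟩, t, ⟨ht_nonneg, ht_le_pi⟩, hcos, hsin⟩ := exists_closing_turn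
  have sin_t_nonneg : 0 ≤ sin t := sin_nonneg_of_nonneg_of_le_pi ht_nonneg ht_le_pi
  have sin_two_mul_d_pos : 0 < sin (2 * d) := sin_pos_of_pos_of_lt_pi (by linarith) (by linarith)
  have b_pos : 0 < d - t := by
    by_contra! h
    linarith [sin_nonpos_of_nonpos_of_neg_pi_le h (by linarith)]
  refine ⟨d - t, ⟨b_pos, by linarith⟩, d, ⟨by linarith, by linarith⟩, ?_, ?_⟩
  · rwa [sub_sub_cancel]
  · rwa [sub_sub_cancel]

end

theorem type7_exists :
    ∃ A B C D E : EuclideanSpace ℝ (Fin 2),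
      ConvexPos5 A B C D E ∧ Equilateral5 A B C D E ∧
      2 * ∠ A B C + ∠ B C D = 2 * Real.pi ∧
      2 * ∠ C D E + ∠ E A B = 2 * Real.pi := by
  obtain ⟨b, ⟨hb0, hb⟩, d, ⟨hd0, hd⟩, hcos, hsin⟩ := exists_closing_angles
  obtain ⟨A, B, C, D, E, equilateral, hAB, hBC, hCD, hDE, hEA⟩ :=
    exists_equilateral5_hasDirection (sum_unitVec_eq_zero hcos hsin)
  have convex : CcwConvex5 A B C D E := by
    apply ccwConvex5_of_hasDirection hAB hBC hCD hDE hEA <;> constructor <;> linarith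
  have angle_B : ∠ A B C = Real.pi - b := by
    rw [hAB.angle_eq hBC ⟨by linarith, by linarith⟩]; ring
  have angle_C : ∠ B C D = 2 * b := by
    rw [hBC.angle_eq hCD ⟨by linarith, by linarith⟩]; ring
  have angle_D : ∠ C D E = Real.pi - d := by
    rw [hCD.angle_eq hDE ⟨by linarith, by linarith⟩]; ring
  have angle_A : ∠ E A B = 2 * d := by
    rw [hEA.angle_eq hAB.add_two_pi ⟨by linarith, by linarith⟩]; ring
  refine ⟨A, B, C, D, E, .inl convex, equilateral, ?_, ?_⟩
  · rw [angle_B, angle_C]; ring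
  · rw [angle_D, angle_A]; ring
end

section
/- Let ABCDEF be a strictly convex equilateral hexagon in the Euclidean plane whose interior angles at the alternating vertices B, D, F all equal 2π/3. Then the hexagon is regular: all six interior angles equal 2π/3. -/
/-!
The triangles `ABC`, `CDE`, `EFA` cut off by the diagonals `AC`, `CE`, `EA` are congruent by
side-angle-side, so `ACE` is equilateral. For oriented angles,
`∡ B C D = ∡ B C A + ∡ A C E + ∡ E C D`, and `∡ E C D = ∡ C A B` by the congruence, so the angle sum
in `ABC` gives `∡ B C D = π - ∡ A B C + ∡ A C E`. Convexity makes all these angles equally signed,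
whence `∠ B C D = 4π/3 - ∠ A B C`, and `2π/3` is the value for which the two angles agree.
-/

open EuclideanGeometry

/-- The six points are in strictly convex position, listed in counterclockwise
cyclic order along their convex hull (in particular no three are collinear):
for every directed edge of the hexagon, all remaining vertices lie strictly to its left. -/
def CcwConvex6 (A B C D E F : EuclideanSpace ℝ (Fin 2)) : Prop :=
  SLeft A B C ∧ SLeft A B D ∧ SLeft A B E ∧ SLeft A B F ∧
  SLeft B C A ∧ SLeft B C D ∧ SLeft B C E ∧ SLeft B C F ∧
  SLeft C D A ∧ SLeft C D B ∧ SLeft C D E ∧ SLeft C D F ∧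
  SLeft D E A ∧ SLeft D E B ∧ SLeft D E C ∧ SLeft D E F ∧
  SLeft E F A ∧ SLeft E F B ∧ SLeft E F C ∧ SLeft E F D ∧
  SLeft F A B ∧ SLeft F A C ∧ SLeft F A D ∧ SLeft F A E

/-- The six points are in strictly convex position, listed in cyclic order
(either orientation) along their convex hull, with no three collinear. -/
def ConvexPos6 (A B C D E F : EuclideanSpace ℝ (Fin 2)) : Prop :=
  CcwConvex6 A B C D E F ∨ CcwConvex6 F E D C B A

/-- The hexagon `ABCDEF` is equilateral. -/
def Equilateral6 (A B C D E F : EuclideanSpace ℝ (Fin 2)) : Prop :=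
  dist A B = dist B C ∧ dist B C = dist C D ∧ dist C D = dist D E ∧
    dist D E = dist E F ∧ dist E F = dist F A

section InnerProductSpace

variable {V P : Type*} [NormedAddCommGroup V] [InnerProductSpace ℝ V] [MetricSpace P]
  [NormedAddTorsor V P]

theorem dist_eq_dist_of_side_angle_side {A B C A' B' C' : P} (hAB : dist A B = dist A' B')
    (hBC : dist B C = dist B' C') (hB : ∠ A B C = ∠ A' B' C') : dist A C = dist A' C' :=
  congruent_iff_dist_eq.1 (side_angle_side hB hAB hBC) 0 2

theorem angle_eq_pi_div_three_of_dist_eq {A B C : P} (hne : A ≠ B) (hAB : dist A B = dist B C)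
    (hBC : dist B C = dist C A) : ∠ A B C = Real.pi / 3 := by
  have hsum := angle_add_angle_add_angle_eq_pi C hne.symm
  have hBC_angles : ∠ A B C = ∠ A C B :=
    angle_eq_angle_of_dist_eq (by rw [hAB, hBC, dist_comm])
  have hAB_angles : ∠ C A B = ∠ C B A :=
    angle_eq_angle_of_dist_eq (by rw [← hBC, dist_comm])
  rw [← angle_comm A C B, ← hBC_angles, hAB_angles, angle_comm C B A] at hsum
  linarith

end InnerProductSpace

section OrientedPlane

theorem sign_oangle_eq_sign_areaForm {V : Type*} [NormedAddCommGroup V] [InnerProductSpace ℝ V]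
    [Fact (Module.finrank ℝ V = 2)] (o : Orientation ℝ V (Fin 2)) (x y : V) :
    (o.oangle x y).sign = SignType.sign (o.areaForm x y) := by
  have him : (o.kahler x y).im = o.areaForm x y := by simp [Orientation.kahler_apply_apply]
  rw [Orientation.oangle, Real.Angle.sign, Real.Angle.sin_coe, ← him, ← Complex.norm_mul_sin_arg]
  rcases eq_or_ne (o.kahler x y) 0 with h | h
  · simp [h]
  · rw [sign_mul, sign_pos (norm_pos_iff.2 h), one_mul]

variable {V P : Type*} [NormedAddCommGroup V] [InnerProductSpace ℝ V] [MetricSpace P]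
  [NormedAddTorsor V P] [Fact (Module.finrank ℝ V = 2)] [Module.Oriented ℝ V (Fin 2)]

theorem oangle_eq_pi_sub_oangle_add_oangle_of_dist_eq {A B C D E : P} (hAB : dist A B = dist C D)
    (hBC : dist B C = dist D E) (hB : ∠ A B C = ∠ C D E)
    (hs : (∡ A B C).sign = (∡ C D E).sign) (h0 : (∡ A B C).sign ≠ 0) :
    ∡ B C D = Real.pi - ∡ A B C + ∡ A C E := by
  have h0' : (∡ C D E).sign ≠ 0 := hs ▸ h0
  have hCD : D ≠ C := (left_ne_of_oangle_sign_ne_zero h0').symm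
  have hCE : E ≠ C := (left_ne_right_of_oangle_sign_ne_zero h0').symm
  have hBA : B ≠ A := (left_ne_of_oangle_sign_ne_zero h0).symm
  have hCB : C ≠ B := right_ne_of_oangle_sign_ne_zero h0
  have hAC : A ≠ C := left_ne_right_of_oangle_sign_ne_zero h0
  have hcongr : ∡ C A B = ∡ E C D :=
    oangle_eq_of_angle_eq_of_sign_eq
      (angle_eq_of_congruent (side_angle_side hB hAB hBC) 2 0 1)
      (by rw [← oangle_rotate_sign, ← oangle_rotate_sign E, hs])
  have hsum : ∡ A B C + ∡ B C A + ∡ C A B = Real.pi :=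
    oangle_add_oangle_add_oangle_eq_pi hBA hCB hAC
  calc ∡ B C D = ∡ B C A + ∡ A C E + ∡ E C D := by
        rw [oangle_add hCB.symm hAC hCE, oangle_add hCB.symm hCE hCD]
    _ = Real.pi - ∡ A B C + ∡ A C E := by
        rw [← hcongr, ← hsum]
        abel

theorem angle_eq_pi_sub_angle_add_angle_of_dist_eq {A B C D E : P} (hAB : dist A B = dist C D)
    (hBC : dist B C = dist D E) (hB : ∠ A B C = ∠ C D E)
    (h0 : (∡ A B C).sign ≠ 0) (hD : (∡ C D E).sign = (∡ A B C).sign)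
    (hC : (∡ B C D).sign = (∡ A B C).sign) (hE : (∡ A C E).sign = (∡ A B C).sign) :
    ∠ B C D = Real.pi - ∠ A B C + ∠ A C E := by
  have h := oangle_eq_pi_sub_oangle_add_oangle_of_dist_eq hAB hBC hB hD.symm h0
  have hcoe : (∠ B C D : Real.Angle) = (Real.pi - ∠ A B C + ∠ A C E : ℝ) := by
    rcases SignType.trichotomy (∡ A B C).sign with hs | hs | hs
    · rw [oangle_eq_neg_angle_of_sign_eq_neg_one hs,
        oangle_eq_neg_angle_of_sign_eq_neg_one (hC.trans hs),
        oangle_eq_neg_angle_of_sign_eq_neg_one (hE.trans hs)] at h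
      calc (∠ B C D : Real.Angle) = -(Real.pi - -∠ A B C + -∠ A C E) := by rw [← h, neg_neg]
        _ = -Real.pi - ∠ A B C + ∠ A C E := by abel
        _ = Real.pi - ∠ A B C + ∠ A C E := by rw [Real.Angle.neg_coe_pi]
    · exact absurd hs h0
    · rwa [oangle_eq_angle_of_sign_eq_one hs, oangle_eq_angle_of_sign_eq_one (hC.trans hs),
        oangle_eq_angle_of_sign_eq_one (hE.trans hs)] at h
  obtain ⟨k, hk⟩ := Real.Angle.angle_eq_iff_two_pi_dvd_sub.1 hcoe
  have hpos : 0 < ∠ A B C := (angle_nonneg A B C).lt_of_ne' fun hzero => h0 <| by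
    rw [(oangle_eq_zero_iff_angle_eq_zero (left_ne_of_oangle_sign_ne_zero h0)
      (right_ne_of_oangle_sign_ne_zero h0)).2 hzero, Real.Angle.sign_zero]
  have hk0 : k = 0 := IsStrictOrderedRing.int_eq_of_mul_mem_Ioo Real.two_pi_pos <| by
    rw [← hk]
    push_cast
    constructor <;>
      linarith [angle_nonneg B C D, angle_le_pi B C D, angle_nonneg A C E, angle_le_pi A C E,
        angle_le_pi A B C]
  rw [hk0, Int.cast_zero, mul_zero] at hk
  exact sub_eq_zero.1 hk

end OrientedPlane

section ConvexHexagon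

open scoped EuclideanSpace

/-- The orientation of the plane in which the standard basis is positive; it makes the oriented
angles `∡` available, and `det2` is its area form. -/
noncomputable instance : Module.Oriented ℝ (EuclideanSpace ℝ (Fin 2)) (Fin 2) :=
  ⟨(EuclideanSpace.basisFun (Fin 2) ℝ).toBasis.orientation⟩

theorem areaForm_eq_det2 (u v : EuclideanSpace ℝ (Fin 2)) :
    (o : Orientation ℝ (EuclideanSpace ℝ (Fin 2)) (Fin 2)).areaForm u v = det2 u v := by
  rw [Orientation.areaForm_to_volumeForm,
    o.volumeForm_robust (EuclideanSpace.basisFun (Fin 2) ℝ) rfl]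
  simp [Module.Basis.det_apply, Matrix.det_fin_two, det2, Module.Basis.toMatrix_apply, mul_comm]

namespace SLeft

variable {P Q R : EuclideanSpace ℝ (Fin 2)}

theorem sign_oangle_eq_neg_one (h : SLeft P Q R) : (∡ P Q R).sign = -1 := by
  rw [← oangle_swap₁₂_sign, oangle, sign_oangle_eq_sign_areaForm, areaForm_eq_det2]
  exact congrArg Neg.neg (sign_pos h)

theorem sign_oangle_rev_eq_one (h : SLeft P Q R) : (∡ R Q P).sign = 1 := by
  rw [← oangle_swap₁₃_sign, h.sign_oangle_eq_neg_one, neg_neg]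

end SLeft

variable {A B C D E F : EuclideanSpace ℝ (Fin 2)}

namespace CcwConvex6

theorem rotate (h : CcwConvex6 A B C D E F) : CcwConvex6 B C D E F A := by
  unfold CcwConvex6 at h ⊢
  tauto

theorem sLeft_diagonals (h : CcwConvex6 A B C D E F) : SLeft A C E := by
  obtain ⟨hABC, hABD, hABE, -, -, -, -, -, hCDA, -, -, -, hDEA, -⟩ := h
  -- The Plücker relation expresses `A C E` through triangles resting on edges of the hexagon.
  have pluecker : det2 (B - A) (D - A) * det2 (C - A) (E - A) =
      det2 (B - A) (C - A) * det2 (E - D) (A - D) +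
        det2 (B - A) (E - A) * det2 (D - C) (A - C) := by
    simp only [det2, PiLp.sub_apply]
    ring
  refine pos_of_mul_pos_right ?_ hABD.le
  rw [pluecker]
  exact add_pos (mul_pos hABC hDEA) (mul_pos hABE hCDA)

end CcwConvex6

namespace ConvexPos6

theorem rotate (h : ConvexPos6 A B C D E F) : ConvexPos6 B C D E F A :=
  h.imp .rotate fun h => h.rotate.rotate.rotate.rotate.rotate

theorem sign_oangle_eq (h : ConvexPos6 A B C D E F) :
    (∡ A B C).sign ≠ 0 ∧ (∡ C D E).sign = (∡ A B C).sign ∧ (∡ B C D).sign = (∡ A B C).sign ∧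
      (∡ A C E).sign = (∡ A B C).sign := by
  rcases h with h | h
  · simp [h.1.sign_oangle_eq_neg_one, h.rotate.1.sign_oangle_eq_neg_one,
      h.rotate.rotate.1.sign_oangle_eq_neg_one, h.sLeft_diagonals.sign_oangle_eq_neg_one]
  · simp [h.rotate.1.sign_oangle_rev_eq_one, h.rotate.rotate.1.sign_oangle_rev_eq_one,
      h.rotate.rotate.rotate.1.sign_oangle_rev_eq_one,
      h.rotate.sLeft_diagonals.sign_oangle_rev_eq_one]

theorem angle_eq_sub_angle_of_dist_eq (h : ConvexPos6 A B C D E F) (hCD : dist A B = dist C D)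
    (hDE : dist B C = dist D E) (hEF : dist C D = dist E F) (hFA : dist D E = dist F A)
    (hD : ∠ A B C = ∠ C D E) (hF : ∠ C D E = ∠ E F A) :
    ∠ B C D = 4 * Real.pi / 3 - ∠ A B C := by
  obtain ⟨hsB, hsD, hsC, hsACE⟩ := h.sign_oangle_eq
  have hACE : ∠ A C E = Real.pi / 3 :=
    angle_eq_pi_div_three_of_dist_eq (left_ne_right_of_oangle_sign_ne_zero hsB)
      (dist_eq_dist_of_side_angle_side hCD hDE hD) (dist_eq_dist_of_side_angle_side hEF hFA hF)
  rw [angle_eq_pi_sub_angle_add_angle_of_dist_eq hCD hDE hD hsB hsD hsC hsACE, hACE]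
  ring

end ConvexPos6

theorem hexagon_alternating_angles_regular_general (hconv : ConvexPos6 A B C D E F)
    (hCD : dist A B = dist C D) (hEF : dist C D = dist E F)
    (hDE : dist B C = dist D E) (hFA : dist D E = dist F A)
    (hD : ∠ A B C = ∠ C D E) (hF : ∠ C D E = ∠ E F A) :
    ∠ F A B = 4 * Real.pi / 3 - ∠ A B C ∧ ∠ B C D = 4 * Real.pi / 3 - ∠ A B C ∧
      ∠ D E F = 4 * Real.pi / 3 - ∠ A B C := by
  have hconvE := hconv.rotate.rotate
  have hconvA := hconvE.rotate.rotate
  refine ⟨?_, hconv.angle_eq_sub_angle_of_dist_eq hCD hDE hEF hFA hD hF, ?_⟩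
  · rw [hD, hF]
    exact hconvA.angle_eq_sub_angle_of_dist_eq (hCD.trans hEF).symm (hDE.trans hFA).symm hCD hDE
      (hD.trans hF).symm hD
  · rw [hD]
    exact hconvE.angle_eq_sub_angle_of_dist_eq hEF hFA (hCD.trans hEF).symm (hDE.trans hFA).symm
      hF (hD.trans hF).symm

end ConvexHexagon

theorem hexagon_alternating_angles_regular
    (A B C D E F : EuclideanSpace ℝ (Fin 2))
    (hconv : ConvexPos6 A B C D E F) (hequi : Equilateral6 A B C D E F)
    (hB : ∠ A B C = 2 * Real.pi / 3) (hD : ∠ C D E = 2 * Real.pi / 3)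
    (hF : ∠ E F A = 2 * Real.pi / 3) :
    ∠ F A B = 2 * Real.pi / 3 ∧ ∠ A B C = 2 * Real.pi / 3 ∧
    ∠ B C D = 2 * Real.pi / 3 ∧ ∠ C D E = 2 * Real.pi / 3 ∧
    ∠ D E F = 2 * Real.pi / 3 ∧ ∠ E F A = 2 * Real.pi / 3 := by
  obtain ⟨hAB, hBC, hCD, hDE, hEF⟩ := hequi
  obtain ⟨hA, hC, hE⟩ := hexagon_alternating_angles_regular_general hconv (hAB.trans hBC)
    (hCD.trans hDE) (hBC.trans hCD) (hDE.trans hEF) (hB.trans hD.symm) (hD.trans hF.symm)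
  have hangle : 4 * Real.pi / 3 - ∠ A B C = 2 * Real.pi / 3 := by rw [hB]; ring
  exact ⟨hA.trans hangle, hB, hC.trans hangle, hD, hE.trans hangle, hF⟩
end

section
/- Let ABCDE be a strictly convex equilateral pentagon whose interior angles satisfy 2α + β = 2π and 2δ + γ = 2π (type 8 conditions). Then ε = π − β and α = π − β/2; in particular, all five interior angles are determined by β. -/
/-!
In the isosceles triangle `ABC` the base angle at `A` is `(π - β) / 2`, so `α = π - β / 2` says that
`EA ⟂ AC`; in the mirror image, `ED ⟂ DB`. With unit sides, computing `CE²` by Pythagoras in `EAC`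
and by the law of cosines in `CDE`, where `δ = π - γ / 2`, gives `cos β + cos (γ / 2) = 1 / 2`.
The mirror image gives `cos γ + cos (β / 2) = 1 / 2`. Together these force `β = γ`, and the angle
sum `3π` of the pentagon yields `ε`.
-/

open EuclideanGeometry

open scoped Real NNReal

section Trigonometry

lemma eq_of_cos_add_cos_half {x y : ℝ} (hx : x ∈ Set.Icc 0 π) (hy : y ∈ Set.Icc 0 π)
    (hxy : Real.cos x + Real.cos (y / 2) = 1 / 2) (hyx : Real.cos y + Real.cos (x / 2) = 1 / 2) :
    x = y := by
  have hX : 0 ≤ Real.cos (x / 2) :=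
    Real.cos_nonneg_of_neg_pi_div_two_le_of_le (by linarith [hx.1, hx.2]) (by linarith [hx.2])
  have hY : 0 ≤ Real.cos (y / 2) :=
    Real.cos_nonneg_of_neg_pi_div_two_le_of_le (by linarith [hy.1, hy.2]) (by linarith [hy.2])
  have hdouble (z : ℝ) : Real.cos z = 2 * Real.cos (z / 2) ^ 2 - 1 := by
    rw [← Real.cos_two_mul, mul_div_cancel₀ z two_ne_zero]
  rw [hdouble] at hxy hyx
  have hfactor : (Real.cos (x / 2) - Real.cos (y / 2)) *
      (2 * (Real.cos (x / 2) + Real.cos (y / 2)) - 1) = 0 := by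
    linear_combination hxy - hyx
  have hcos : Real.cos (x / 2) = Real.cos (y / 2) := by
    rcases mul_eq_zero.1 hfactor with h | h
    · exact sub_eq_zero.1 h
    · have hXsq : Real.cos (x / 2) ^ 2 ≤ (1 / 2) ^ 2 := pow_le_pow_left₀ hX (by linarith) 2
      linarith
  have hhalf : x / 2 = y / 2 :=
    Real.injOn_cos ⟨by linarith [hx.1], by linarith [hx.1, hx.2]⟩
      ⟨by linarith [hy.1], by linarith [hy.1, hy.2]⟩ hcos
  linarith

end Trigonometry

section Metric

variable {V P : Type*} [NormedAddCommGroup V] [InnerProductSpace ℝ V] [MetricSpace P]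
  [NormedAddTorsor V P] {A B C D E : P}

lemma dist_sq_eq_of_isosceles {r : ℝ} (hAB : dist A B = r) (hBC : dist B C = r) :
    dist A C ^ 2 = 2 * r ^ 2 * (1 - Real.cos (∠ A B C)) := by
  have h := law_cos A B C
  rw [dist_comm C B, hAB, hBC] at h
  linear_combination h

lemma angle_eq_pi_div_two_of_two_mul_angle_add_angle (hne : A ≠ B) (hiso : dist A B = dist B C)
    (hsplit : ∠ E A C + ∠ C A B = ∠ E A B) (hangle : 2 * ∠ E A B + ∠ A B C = 2 * π) :
    ∠ E A C = π / 2 := by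
  have hbase : ∠ C A B = ∠ B C A := by
    rw [dist_comm A B] at hiso
    rw [angle_comm C A B]
    exact angle_eq_angle_of_dist_eq hiso
  have hsum := angle_add_angle_add_angle_eq_pi C hne.symm
  linarith

lemma cos_angle_sub_cos_angle_eq_half {r : ℝ} (hr : r ≠ 0) (hAB : dist A B = r)
    (hBC : dist B C = r) (hCD : dist C D = r) (hDE : dist D E = r) (hEA : dist E A = r)
    (hright : ∠ E A C = π / 2) :
    Real.cos (∠ A B C) - Real.cos (∠ C D E) = 1 / 2 := by
  have hpyth := (dist_sq_eq_dist_sq_add_dist_sq_iff_angle_eq_pi_div_two E A C).2 hright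
  have hAC := dist_sq_eq_of_isosceles hAB hBC
  have hCE := dist_sq_eq_of_isosceles hCD hDE
  rw [dist_comm E C, dist_comm C A, hEA] at hpyth
  apply mul_left_cancel₀ (pow_ne_zero 2 hr)
  linear_combination (hAC + hpyth - hCE) / 2

end Metric

section Convexity

variable {A B C D E : EuclideanSpace ℝ (Fin 2)}

lemma SLeft.rotate (h : SLeft A B C) : SLeft B C A := by
  simp only [SLeft, det2, PiLp.sub_apply] at h ⊢
  linarith

lemma SLeft.ne (h : SLeft A B C) : A ≠ B := by
  rintro rfl
  simp [SLeft, det2] at h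

lemma SLeft.ne' (h : SLeft A B C) : A ≠ C := h.rotate.rotate.ne.symm

lemma det2_smul_eq_add (u v w : EuclideanSpace ℝ (Fin 2)) :
    det2 u w • v = det2 v w • u + det2 u v • w := by
  ext i
  fin_cases i <;> simp [det2] <;> ring

lemma SLeft.angle_add_angle (hBC : SLeft A B C) (hCE : SLeft A C E) (hBE : SLeft A B E) :
    ∠ B A C + ∠ C A E = ∠ B A E := by
  have hcone : C - A ∈ Submodule.span ℝ≥0 {B - A, E - A} := by
    -- Cramer's rule gives the coefficients; the three orientations make them nonnegative.
    refine Submodule.mem_span_pair.2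
      ⟨⟨_, (div_pos hCE hBE).le⟩, ⟨_, (div_pos hBC hBE).le⟩, ?_⟩
    change (det2 (C - A) (E - A) / det2 (B - A) (E - A)) • (B - A) +
      (det2 (B - A) (C - A) / det2 (B - A) (E - A)) • (E - A) = C - A
    rw [div_eq_inv_mul, div_eq_inv_mul, mul_smul, mul_smul, ← smul_add, ← det2_smul_eq_add,
      inv_smul_smul₀ (ne_of_gt hBE)]
  exact (InnerProductGeometry.angle_eq_angle_add_add_angle_add_of_mem_span
    (sub_ne_zero.2 hBC.ne'.symm) hcone).symm

lemma CcwConvex5.rotate (h : CcwConvex5 A B C D E) : CcwConvex5 B C D E A := by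
  obtain ⟨hABC, hABD, hABE, hrest⟩ := h
  simp only [CcwConvex5] at hrest ⊢
  tauto

lemma ConvexPos5.rotate (h : ConvexPos5 A B C D E) : ConvexPos5 B C D E A :=
  h.imp CcwConvex5.rotate fun hcw ↦ hcw.rotate.rotate.rotate.rotate

lemma ConvexPos5.reverse (h : ConvexPos5 A B C D E) : ConvexPos5 E D C B A := h.symm

lemma ConvexPos5.ne (h : ConvexPos5 A B C D E) : A ≠ B := by
  rcases h with ⟨hABC, -⟩ | ⟨-, -, -, -, -, -, -, -, -, hBAE, -⟩
  · exact hABC.ne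
  · exact hBAE.ne.symm

lemma ConvexPos5.vertex_angle_eq_add (h : ConvexPos5 A B C D E) :
    ∠ E A B = ∠ E A C + ∠ C A B := by
  rcases h with ⟨hABC, -, hABE, -, -, -, -, -, -, -, -, -, -, hEAC, -⟩ |
    ⟨-, -, -, -, -, -, -, -, -, -, -, hBAC, -, hAEC, hAEB⟩
  · rw [angle_comm E A C, angle_comm C A B, angle_comm E A B, add_comm]
    exact (hABC.angle_add_angle hEAC.rotate hABE).symm
  · exact (hAEC.angle_add_angle hBAC.rotate hAEB).symm

lemma ConvexPos5.diagonal_angle_eq_add (h : ConvexPos5 A B C D E) :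
    ∠ E A C = ∠ E A D + ∠ D A C := by
  rcases h with ⟨-, -, -, -, -, -, -, hCDA, -, hDEA, -, -, -, hEAC, -⟩ |
    ⟨-, -, -, -, hDCA, -, -, -, -, -, -, -, hAED, hAEC, -⟩
  · rw [angle_comm E A D, angle_comm D A C, angle_comm E A C, add_comm]
    exact (hCDA.rotate.rotate.angle_add_angle hDEA.rotate.rotate hEAC.rotate).symm
  · exact (hAED.angle_add_angle hDCA.rotate.rotate hAEC).symm

lemma ConvexPos5.sum_angles (h : ConvexPos5 A B C D E) :
    ∠ E A B + ∠ A B C + ∠ B C D + ∠ C D E + ∠ D E A = 3 * π := by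
  have hABC := angle_add_angle_add_angle_eq_pi C h.ne.symm
  have hACD := angle_add_angle_add_angle_eq_pi A h.rotate.rotate.ne.symm
  have hADE := angle_add_angle_add_angle_eq_pi A h.rotate.rotate.rotate.ne.symm
  have hA := h.vertex_angle_eq_add
  have hEAC := h.diagonal_angle_eq_add
  have hC := h.reverse.rotate.rotate.vertex_angle_eq_add
  have hD := h.rotate.rotate.rotate.vertex_angle_eq_add
  rw [angle_comm D C B, angle_comm D C A, angle_comm A C B] at hC
  linarith

end Convexity

section Pentagon

variable {A B C D E : EuclideanSpace ℝ (Fin 2)}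

lemma Equilateral5.rotate (h : Equilateral5 A B C D E) : Equilateral5 B C D E A := by
  obtain ⟨hAB, hBC, hCD, hDE⟩ := h
  exact ⟨hBC, hCD, hDE, by rw [hAB, hBC, hCD, hDE]⟩

lemma Equilateral5.reverse (h : Equilateral5 A B C D E) : Equilateral5 E D C B A := by
  obtain ⟨hAB, hBC, hCD, hDE⟩ := h
  simp only [Equilateral5, dist_comm E D, dist_comm D C, dist_comm C B, dist_comm B A,
    dist_comm A E]
  exact ⟨hCD.symm, hBC.symm, hAB.symm, by rw [hAB, hBC, hCD, hDE]⟩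

lemma cos_add_cos_half_eq_half_of_type8 (hconv : ConvexPos5 A B C D E)
    (hequi : Equilateral5 A B C D E) (hα : 2 * ∠ E A B + ∠ A B C = 2 * π)
    (hδ : 2 * ∠ C D E + ∠ B C D = 2 * π) :
    Real.cos (∠ A B C) + Real.cos (∠ B C D / 2) = 1 / 2 := by
  obtain ⟨hAB, hBC, hCD, hDE⟩ := hequi
  have hright : ∠ E A C = π / 2 :=
    angle_eq_pi_div_two_of_two_mul_angle_add_angle hconv.ne hAB hconv.vertex_angle_eq_add.symm hα
  have hcos := cos_angle_sub_cos_angle_eq_half (dist_ne_zero.2 hconv.ne) rfl hAB.symm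
    (hAB.trans hBC).symm (hAB.trans (hBC.trans hCD)).symm
    (hAB.trans (hBC.trans (hCD.trans hDE))).symm hright
  rwa [show ∠ C D E = π - ∠ B C D / 2 by linarith, Real.cos_pi_sub, sub_neg_eq_add] at hcos

lemma angle_eq_angle_of_type8 (hconv : ConvexPos5 A B C D E) (hequi : Equilateral5 A B C D E)
    (hα : 2 * ∠ E A B + ∠ A B C = 2 * π) (hδ : 2 * ∠ C D E + ∠ B C D = 2 * π) :
    ∠ A B C = ∠ B C D := by
  have hβγ := cos_add_cos_half_eq_half_of_type8 hconv hequi hα hδ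
  have hγβ : Real.cos (∠ B C D) + Real.cos (∠ A B C / 2) = 1 / 2 := by
    rw [angle_comm B C D, angle_comm A B C]
    apply cos_add_cos_half_eq_half_of_type8 hconv.reverse.rotate hequi.reverse.rotate
    · rwa [angle_comm E D C, angle_comm D C B]
    · rwa [angle_comm B A E, angle_comm C B A]
  exact eq_of_cos_add_cos_half ⟨angle_nonneg _ _ _, angle_le_pi _ _ _⟩
    ⟨angle_nonneg _ _ _, angle_le_pi _ _ _⟩ hβγ hγβ

end Pentagon

theorem type8_angles_from_beta
    (A B C D E : EuclideanSpace ℝ (Fin 2)) (α β γ δ ε : ℝ)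
    (hconv : ConvexPos5 A B C D E) (hequi : Equilateral5 A B C D E)
    (hα : α = ∠ E A B) (hβ : β = ∠ A B C) (hγ : γ = ∠ B C D)
    (hδ : δ = ∠ C D E) (hε : ε = ∠ D E A)
    (h1 : 2 * α + β = 2 * Real.pi) (h2 : 2 * δ + γ = 2 * Real.pi) :
    ε = Real.pi - β ∧ α = Real.pi - β / 2 := by
  subst hα hβ hγ hδ hε
  have hβγ := angle_eq_angle_of_type8 hconv hequi h1 h2
  have hsum := hconv.sum_angles
  constructor <;> linarith
end
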